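/- For every polynomial p of degree at most m on ℝ^d and every multi-index derivative order n ≤ m, the n-th derivative at zero is controlled by finite differences at zero: |∇^n p(0)| ≤ Σ_{k=n}^m C^k |D^k p(0)| for a universal constant C, where D^k p(0) denotes the collection of iterated forward unit finite differences of order k evaluated at 0 and |∇^n p(0)| the Euclidean norm of the tensor of n-th partial derivatives at 0. -/

import Mathlib

open MvPolynomial

/-- Iterated partial derivative `∂^α` on polynomials in `d` variables. -/
noncomputable def pdMulti {d : ℕ} (α : Fin d → ℕ) :
    MvPolynomial (Fin d) ℝ →ₗ[ℝ] MvPolynomial (Fin d) ℝ :=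
  (List.ofFn (fun i : Fin d =>
    ((((MvPolynomial.pderiv i).toLinearMap : Module.End ℝ (MvPolynomial (Fin d) ℝ))) ^ (α i)))).prod

/-- Forward finite difference in the `i`-th coordinate direction. -/
def fdiff {d : ℕ} (i : Fin d) (f : (Fin d → ℝ) → ℝ) : (Fin d → ℝ) → ℝ :=
  fun x => f (x + Pi.single i 1) - f x

/-- Iterated forward finite difference `D^α = D_1^{α_1} ⋯ D_d^{α_d}`. -/
def fdiffMulti {d : ℕ} (α : Fin d → ℕ) (f : (Fin d → ℝ) → ℝ) : (Fin d → ℝ) → ℝ :=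
  ((List.ofFn (fun i : Fin d => (fdiff i)^[α i])).foldr (· ∘ ·) id) f

/-- `|∇ⁿ p(0)| = (Σ_{|α|=n} (n!／α!) (∂^α p(0))²)^{1/2}`. -/
noncomputable def derivNorm {d : ℕ} (n : ℕ) (p : MvPolynomial (Fin d) ℝ) : ℝ :=
  Real.sqrt (∑ᶠ α : Fin d → ℕ,
    if (∑ i, α i) = n then
      ((Nat.factorial n : ℝ) / ((∏ i, Nat.factorial (α i) : ℕ) : ℝ)) *
        (MvPolynomial.eval 0 (pdMulti α p)) ^ 2
    else 0)

/-- `|D^k p(0)| = (Σ_{|α|=k} (D^α p(0))²)^{1/2}`. -/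
noncomputable def fdiffNorm {d : ℕ} (k : ℕ) (p : MvPolynomial (Fin d) ℝ) : ℝ :=
  Real.sqrt (∑ᶠ α : Fin d → ℕ,
    if (∑ i, α i) = k then
      (fdiffMulti α (fun z => MvPolynomial.eval z p) 0) ^ 2
    else 0)

noncomputable def cc (a b : ℕ) : ℝ :=
  (a.factorial : ℝ) * (descPochhammer ℝ b).coeff a / (b.factorial : ℝ)

lemma cc_zero_of_lt {a b : ℕ} (h : b < a) : cc a b = 0 := by
  unfold cc
  rw [Polynomial.coeff_eq_zero_of_natDegree_lt]
  · simp
  · rwa [descPochhammer_natDegree]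

lemma cc_bound (a b : ℕ) : |cc a b| ≤ 2 ^ b := by
  induction b generalizing a with
  | zero =>
    rcases Nat.eq_zero_or_pos a with h | h
    · subst h; simp [cc]
    · rw [cc_zero_of_lt h]; simp
  | succ b ih =>
    rcases lt_or_ge (b + 1) a with h | h
    · rw [cc_zero_of_lt h]; simp
    have hb : (0 : ℝ) < (b : ℝ) + 1 := by positivity
    have hf : (b.factorial : ℝ) ≠ 0 := by positivity
    cases a with
    | zero =>
      have : cc 0 (b + 1) = - (b * cc 0 b) / (b + 1) := by
        unfold cc
        rw [descPochhammer_succ_right, mul_sub, Polynomial.coeff_sub, ← Polynomial.C_eq_natCast,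
          Polynomial.coeff_mul_C, Polynomial.coeff_mul_X_zero, Nat.factorial_succ]
        push_cast
        field_simp
        simp
      rw [this, abs_div, abs_neg, abs_mul, abs_of_pos hb, div_le_iff₀ hb, Nat.abs_cast]
      have h1 := ih 0
      have h2 := abs_nonneg (cc 0 b)
      have h3 : (0:ℝ) ≤ b := by positivity
      have h4 : (0:ℝ) < 2 ^ b := by positivity
      rw [pow_succ]
      nlinarith [mul_le_mul_of_nonneg_left h1 h3, mul_nonneg h3 h4.le]
    | succ a =>
      have : cc (a + 1) (b + 1) = ((a + 1) * cc a b - b * cc (a + 1) b) / (b + 1) := by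
        unfold cc
        rw [descPochhammer_succ_right, mul_sub, Polynomial.coeff_sub, ← Polynomial.C_eq_natCast,
          Polynomial.coeff_mul_C, Polynomial.coeff_mul_X, Nat.factorial_succ, Nat.factorial_succ]
        push_cast
        field_simp
      rw [this, abs_div, abs_of_pos hb, div_le_iff₀ hb]
      have h1 := ih a
      have h2 := ih (a + 1)
      have h3 : (0:ℝ) ≤ b := by positivity
      have h4 : (0:ℝ) < 2 ^ b := by positivity
      have h5 : (a : ℝ) + 1 ≤ b + 1 := by exact_mod_cast h
      have h6 : (0 : ℝ) ≤ (a : ℝ) + 1 := by positivity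
      calc |((a:ℝ) + 1) * cc a b - b * cc (a + 1) b|
          ≤ |((a:ℝ) + 1) * cc a b| + |b * cc (a + 1) b| := abs_sub _ _
        _ = ((a:ℝ) + 1) * |cc a b| + b * |cc (a + 1) b| := by
            rw [abs_mul, abs_mul, abs_of_nonneg h6, Nat.abs_cast]
        _ ≤ (b + 1) * 2 ^ b + (b + 1) * 2 ^ b := by gcongr; linarith
        _ = 2 ^ (b + 1) * (b + 1) := by ring

lemma newton_pow (g N : ℕ) (h : g ≤ N) :
    (Polynomial.X ^ g : Polynomial ℝ) = ∑ b ∈ Finset.range (N + 1),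
      Polynomial.C (((fwdDiff (1:ℝ))^[b] (fun x : ℝ => x ^ g) 0) / (b.factorial : ℝ)) *
        descPochhammer ℝ b := by
  apply Polynomial.eq_of_infinite_eval_eq
  apply Set.Infinite.mono (s := Set.range (fun n : ℕ => (n : ℝ)))
  · rintro _ ⟨n, rfl⟩
    simp only [Set.mem_setOf_eq, Polynomial.eval_pow, Polynomial.eval_X,
      Polynomial.eval_finset_sum, Polynomial.eval_mul, Polynomial.eval_C]
    have h1 := shift_eq_sum_fwdDiff_iter (1:ℝ) (fun x : ℝ => x ^ g) n 0
    simp only [zero_add, nsmul_eq_mul, mul_one] at h1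
    rw [h1]
    have e : ∀ k, ((fwdDiff (1:ℝ))^[k] (fun x : ℝ => x ^ g) 0) / (k.factorial : ℝ) *
        (descPochhammer ℝ k).eval (n:ℝ) =
        (n.choose k : ℝ) * (fwdDiff (1:ℝ))^[k] (fun x : ℝ => x ^ g) 0 := by
      intro k
      rw [Nat.cast_choose_eq_descPochhammer_div]
      ring
    simp only [e]
    rcases le_total n N with hn | hn
    · apply Finset.sum_subset
      · intro x; simp; omega
      · intro x _ hx
        rw [Nat.choose_eq_zero_of_lt (by simpa using hx)]; simp
    · symm
      apply Finset.sum_subset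
      · intro x; simp; omega
      · intro x _ hx
        have : g < x := by simp at hx; omega
        rw [fwdDiff_iter_pow_eq_zero_of_lt this]; simp
  · exact Set.infinite_range_of_injective Nat.cast_injective

lemma one_dim (a g N : ℕ) (h : g ≤ N) :
    (Polynomial.derivative^[a] (Polynomial.X ^ g : Polynomial ℝ)).eval 0 =
      ∑ b ∈ Finset.range (N + 1), cc a b * (fwdDiff (1:ℝ))^[b] (fun x : ℝ => x ^ g) 0 := by
  rw [← Polynomial.coeff_zero_eq_eval_zero, Polynomial.coeff_iterate_derivative,
    newton_pow g N h, Polynomial.finset_sum_coeff, Finset.smul_sum]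
  apply Finset.sum_congr rfl
  intro b _
  rw [Polynomial.coeff_C_mul]
  simp [cc, Nat.descFactorial_self]
  ring

lemma fold_update {d : ℕ} {A B : Type*} (Φ : (Fin d → A) → B) (S : A → A) (T : Fin d → B → B)
    (hT : ∀ i f, T i (Φ f) = Φ (Function.update f i (S (f i)))) (α : Fin d → ℕ)
    (l : List (Fin d)) (hl : l.Nodup) (f : Fin d → A) :
    (l.map (fun i => (T i)^[α i])).foldr (· ∘ ·) id (Φ f) =
      Φ (fun j => if j ∈ l then S^[α j] (f j) else f j) := by
  have hT' : ∀ i k f, (T i)^[k] (Φ f) = Φ (Function.update f i (S^[k] (f i))) := by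
    intro i k
    induction k with
    | zero => intro f; simp
    | succ k ih =>
      intro f
      rw [Function.iterate_succ_apply', ih, hT]
      simp [Function.iterate_succ_apply']
  induction l with
  | nil => simp
  | cons i l ih =>
    rw [List.nodup_cons] at hl
    simp only [List.map_cons, List.foldr_cons, Function.comp_apply]
    rw [ih hl.2, hT']
    congr 1
    ext j
    by_cases hj : j = i
    · subst hj; simp [hl.1]
    · simp [hj]

lemma fold_all {d : ℕ} {A B : Type*} (Φ : (Fin d → A) → B) (S : A → A) (T : Fin d → B → B)
    (hT : ∀ i f, T i (Φ f) = Φ (Function.update f i (S (f i)))) (α : Fin d → ℕ)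
    (f : Fin d → A) :
    (List.ofFn (fun i => (T i)^[α i])).foldr (· ∘ ·) id (Φ f) =
      Φ (fun j => S^[α j] (f j)) := by
  rw [List.ofFn_eq_map, fold_update Φ S T hT α _ (List.nodup_finRange d)]
  simp

lemma fdiffMulti_prod {d : ℕ} (β : Fin d → ℕ) (f : Fin d → ℝ → ℝ) :
    fdiffMulti β (fun z => ∏ j, f j (z j)) = fun z => ∏ j, ((fwdDiff (1:ℝ))^[β j] (f j)) (z j) := by
  refine fold_all (fun (f : Fin d → ℝ → ℝ) (z : Fin d → ℝ) => ∏ j, f j (z j)) (fwdDiff 1) fdiff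
    ?_ β f
  intro i f
  ext z
  have e := fun g : Fin d → ℝ => Fintype.prod_eq_mul_prod_compl i g
  simp only [fdiff]
  rw [e, e (fun j => f j (z j)), e]
  have h1 : ∀ j ∈ ({i}ᶜ : Finset (Fin d)), f j ((z + (Pi.single i 1 : Fin d → ℝ)) j) = f j (z j) := by
    intro j hj
    have : j ≠ i := by simpa using hj
    simp [this]
  have h2 : ∀ j ∈ ({i}ᶜ : Finset (Fin d)),
      Function.update f i (fwdDiff 1 (f i)) j (z j) = f j (z j) := by
    intro j hj
    have : j ≠ i := by simpa using hj
    simp [this]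
  rw [Finset.prod_congr rfl h1, Finset.prod_congr rfl h2]
  simp [fwdDiff, sub_mul]

lemma pdMulti_eq_fold {d : ℕ} (α : Fin d → ℕ) (p : MvPolynomial (Fin d) ℝ) :
    pdMulti α p = (List.ofFn (fun i : Fin d => (fun q => MvPolynomial.pderiv (R := ℝ) i q)^[α i])).foldr
      (· ∘ ·) id p := by
  unfold pdMulti
  rw [List.ofFn_eq_map, List.ofFn_eq_map]
  generalize List.finRange d = l
  induction l with
  | nil => simp
  | cons i l ih =>
    simp only [List.map_cons, List.prod_cons, List.foldr_cons, Function.comp_apply,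
      Module.End.mul_apply, ih, Module.End.pow_apply]
    rfl

lemma pdMulti_prod {d : ℕ} (α : Fin d → ℕ) (f : Fin d → Polynomial ℝ) :
    pdMulti α (∏ j, Polynomial.aeval (X j : MvPolynomial (Fin d) ℝ) (f j)) =
      ∏ j, Polynomial.aeval (X j : MvPolynomial (Fin d) ℝ) (Polynomial.derivative^[α j] (f j)) := by
  rw [pdMulti_eq_fold]
  refine fold_all (fun (f : Fin d → Polynomial ℝ) =>
    ∏ j, Polynomial.aeval (X j : MvPolynomial (Fin d) ℝ) (f j)) Polynomial.derivative _ ?_ α f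
  intro i f
  have e := fun g : Fin d → MvPolynomial (Fin d) ℝ => Fintype.prod_eq_mul_prod_compl i g
  beta_reduce
  rw [e, e]
  have h2 : ∀ j ∈ ({i}ᶜ : Finset (Fin d)),
      Polynomial.aeval (X j : MvPolynomial (Fin d) ℝ)
        (Function.update f i (Polynomial.derivative (f i)) j) = Polynomial.aeval (X j) (f j) := by
    intro j hj
    have : j ≠ i := by simpa using hj
    simp [this]
  have h3 : pderiv i (∏ j ∈ ({i}ᶜ : Finset (Fin d)),
      Polynomial.aeval (X j : MvPolynomial (Fin d) ℝ) (f j)) = 0 := by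
    refine Finset.prod_induction _ (fun q => pderiv i q = 0) ?_ ?_ ?_
    · intro a b ha hb; simp [Derivation.leibniz, ha, hb]
    · simp
    · intro j hj
      have : j ≠ i := by simpa using hj
      simp [Derivation.map_aeval, pderiv_X_of_ne this]
  rw [Finset.prod_congr rfl h2, Derivation.leibniz, h3]
  simp [Derivation.map_aeval, mul_comm]

noncomputable def fdL {d : ℕ} (i : Fin d) : Module.End ℝ ((Fin d → ℝ) → ℝ) where
  toFun := fdiff i
  map_add' f g := by ext x; simp [fdiff]; ring
  map_smul' c f := by ext x; simp [fdiff]; ring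

noncomputable def fdM {d : ℕ} (β : Fin d → ℕ) : Module.End ℝ ((Fin d → ℝ) → ℝ) :=
  (List.ofFn (fun i : Fin d => (fdL i) ^ (β i))).prod

lemma fdM_apply {d : ℕ} (β : Fin d → ℕ) (f : (Fin d → ℝ) → ℝ) : fdM β f = fdiffMulti β f := by
  unfold fdM fdiffMulti
  rw [List.ofFn_eq_map, List.ofFn_eq_map]
  generalize List.finRange d = l
  induction l with
  | nil => simp
  | cons i l ih =>
    simp only [List.map_cons, List.prod_cons, List.foldr_cons, Function.comp_apply,
      Module.End.mul_apply, ih, Module.End.pow_apply]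
    rfl

noncomputable def FF {d : ℕ} (β : Fin d → ℕ) : MvPolynomial (Fin d) ℝ →ₗ[ℝ] ℝ where
  toFun p := fdiffMulti β (fun z => MvPolynomial.eval z p) 0
  map_add' p q := by
    simp only [← fdM_apply, map_add]
    exact congrFun (map_add (fdM β) (fun z => eval z p) (fun z => eval z q)) 0
  map_smul' c p := by
    simp only [← fdM_apply, smul_eval]
    exact congrFun (map_smul (fdM β) c (fun z => eval z p)) 0

lemma FF_mono {d : ℕ} (β : Fin d → ℕ) (γ : Fin d →₀ ℕ) :
    FF β (monomial γ 1) = ∏ j, (fwdDiff (1:ℝ))^[β j] (fun x : ℝ => x ^ γ j) 0 := by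
  have h := congrFun (fdiffMulti_prod β (fun j x => x ^ γ j)) 0
  rw [Pi.zero_def] at h
  rw [← h]
  show fdiffMulti β _ _ = _
  congr 1
  ext z
  simp [eval_monomial, Finsupp.prod_fintype]

lemma pd_mono {d : ℕ} (α : Fin d → ℕ) (γ : Fin d →₀ ℕ) :
    eval 0 (pdMulti α (monomial γ 1)) =
      ∏ j, (Polynomial.derivative^[α j] (Polynomial.X ^ γ j : Polynomial ℝ)).eval 0 := by
  have h := pdMulti_prod α (fun j => (Polynomial.X ^ γ j : Polynomial ℝ))
  have e : (∏ j, Polynomial.aeval (X j : MvPolynomial (Fin d) ℝ)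
      (Polynomial.X ^ γ j : Polynomial ℝ)) = monomial γ 1 := by
    simp [monomial_eq, Finsupp.prod_fintype]
  rw [← e, h, map_prod]
  apply Finset.prod_congr rfl
  intro j _
  generalize Polynomial.derivative^[α j] (Polynomial.X ^ γ j : Polynomial ℝ) = q
  induction q using Polynomial.induction_on' with
  | add p q hp hq => rw [map_add, map_add, hp, hq, Polynomial.eval_add]
  | monomial n a => simp [Polynomial.aeval_monomial]

lemma deg_le {d m : ℕ} {p : MvPolynomial (Fin d) ℝ} (hp : p.totalDegree ≤ m) {γ : Fin d →₀ ℕ}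
    (hγ : γ ∈ p.support) : ∑ i, γ i ≤ m := by
  have := le_totalDegree hγ
  rw [Finsupp.sum_fintype _ _ (by simp)] at this
  exact this.trans hp

lemma expand {d : ℕ} (L : MvPolynomial (Fin d) ℝ →ₗ[ℝ] ℝ) (p : MvPolynomial (Fin d) ℝ) :
    L p = ∑ γ ∈ p.support, p.coeff γ * L (monomial γ 1) := by
  conv_lhs => rw [p.as_sum, map_sum]
  apply Finset.sum_congr rfl
  intro γ _
  rw [← smul_eq_mul, ← map_smul, smul_monomial]
  simp

lemma FF_zero {d m : ℕ} (p : MvPolynomial (Fin d) ℝ) (hp : p.totalDegree ≤ m) (β : Fin d → ℕ)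
    (hβ : m < ∑ i, β i) : FF β p = 0 := by
  rw [expand]
  apply Finset.sum_eq_zero
  intro γ hγ
  have h1 := deg_le hp hγ
  obtain ⟨j, _, hj⟩ := Finset.exists_lt_of_sum_lt (h1.trans_lt hβ)
  rw [FF_mono, Finset.prod_eq_zero (Finset.mem_univ j), mul_zero]
  rw [fwdDiff_iter_pow_eq_zero_of_lt hj]; simp

lemma key {d m : ℕ} (p : MvPolynomial (Fin d) ℝ) (hp : p.totalDegree ≤ m) (α : Fin d → ℕ) :
    eval 0 (pdMulti α p) = ∑ β ∈ Fintype.piFinset (fun _ : Fin d => Finset.range (m + 1)),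
      (∏ i, cc (α i) (β i)) * FF β p := by
  have h := expand ((aeval (0 : Fin d → ℝ)).toLinearMap ∘ₗ pdMulti α) p
  have e : ∀ q : MvPolynomial (Fin d) ℝ, aeval (0 : Fin d → ℝ) q = eval 0 q := by
    intro q; simp [aeval_eq_eval]
  simp only [LinearMap.comp_apply, AlgHom.toLinearMap_apply, e] at h
  rw [h]
  simp_rw [fun β => expand (FF (d := d) β) p, Finset.mul_sum]
  rw [Finset.sum_comm]
  apply Finset.sum_congr rfl
  intro γ hγ
  have h1 := deg_le hp hγ
  rw [pd_mono]
  have h2 : ∀ j, γ j ≤ m := fun j =>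
    (Finset.single_le_sum (f := fun i => γ i) (fun _ _ => Nat.zero_le _) (Finset.mem_univ j)).trans h1
  rw [Finset.prod_congr rfl (fun j _ => one_dim (α j) (γ j) m (h2 j)), Finset.prod_univ_sum,
    Finset.mul_sum]
  apply Finset.sum_congr rfl
  intro β _
  rw [FF_mono, Finset.prod_mul_distrib]
  ring

lemma finsum_piAntidiag {d : ℕ} (n : ℕ) (f : (Fin d → ℕ) → ℝ) :
    (∑ᶠ α : Fin d → ℕ, if (∑ i, α i) = n then f α else 0) =
      ∑ α ∈ Finset.piAntidiag Finset.univ n, f α := by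
  rw [finsum_eq_sum_of_support_subset (s := Finset.piAntidiag Finset.univ n)]
  · apply Finset.sum_congr rfl
    intro α hα
    rw [if_pos (by simpa using hα)]
  · intro α hα
    simp only [Function.mem_support, ne_eq, ite_eq_right_iff, Classical.not_imp] at hα
    simpa using hα.1

lemma key2 {d m : ℕ} (p : MvPolynomial (Fin d) ℝ) (hp : p.totalDegree ≤ m) (α : Fin d → ℕ)
    (n : ℕ) (hα : ∑ i, α i = n) :
    |eval 0 (pdMulti α p)| ≤ ∑ k ∈ Finset.Icc n m,
      ∑ β ∈ Finset.piAntidiag (Finset.univ : Finset (Fin d)) k, 2 ^ k * |FF β p| := by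
  classical
  rw [key p hp]
  have hdisj : ((Finset.Icc n m : Finset ℕ) : Set ℕ).PairwiseDisjoint
      (fun k => Finset.piAntidiag (Finset.univ : Finset (Fin d)) k) := by
    intro a _ b _ hab
    simp only [Function.onFun]
    rw [Finset.disjoint_left]
    intro β h1 h2
    simp at h1 h2
    exact hab (h1.symm.trans h2)
  have hb : ∀ β : Fin d → ℕ, |(∏ i, cc (α i) (β i)) * FF β p| ≤ 2 ^ (∑ i, β i) * |FF β p| := by
    intro β
    rw [abs_mul, Finset.abs_prod, ← Finset.prod_pow_eq_pow_sum]
    gcongr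
    exact cc_bound _ _
  have : ∑ k ∈ Finset.Icc n m,
      ∑ β ∈ Finset.piAntidiag (Finset.univ : Finset (Fin d)) k, 2 ^ k * |FF β p| =
      ∑ β ∈ (Finset.Icc n m).biUnion
        (fun k => Finset.piAntidiag (Finset.univ : Finset (Fin d)) k),
          2 ^ (∑ i, β i) * |FF β p| := by
    rw [Finset.sum_biUnion hdisj]
    apply Finset.sum_congr rfl
    intro k _
    apply Finset.sum_congr rfl
    intro β hβ
    rw [show ∑ i, β i = k by simpa using hβ]
  rw [this]
  refine (Finset.abs_sum_le_sum_abs _ _).trans ?_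
  rw [← Finset.sum_filter_ne_zero]
  refine (Finset.sum_le_sum_of_subset_of_nonneg ?_ (fun _ _ _ => abs_nonneg _)).trans
    (Finset.sum_le_sum (fun β _ => hb β))
  intro β hβ
  simp only [Finset.mem_filter, ne_eq, abs_eq_zero, mul_eq_zero, not_or] at hβ
  simp only [Finset.mem_biUnion, Finset.mem_Icc, Finset.mem_piAntidiag]
  refine ⟨∑ i, β i, ⟨?_, ?_⟩, rfl, by simp⟩
  · rw [← hα]
    apply Finset.sum_le_sum
    intro i _
    by_contra hlt
    exact hβ.2.1 (Finset.prod_eq_zero (Finset.mem_univ i) (cc_zero_of_lt (not_le.mp hlt)))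
  · by_contra hlt
    exact hβ.2.2 (FF_zero p hp β (not_le.mp hlt))

lemma FF_le {d : ℕ} (p : MvPolynomial (Fin d) ℝ) (k : ℕ) :
    ∑ β ∈ Finset.piAntidiag (Finset.univ : Finset (Fin d)) k, 2 ^ k * |FF β p| ≤
      (2 * 2 ^ d) ^ k * fdiffNorm k p := by
  have h1 : ∀ β ∈ Finset.piAntidiag (Finset.univ : Finset (Fin d)) k,
      2 ^ k * |FF β p| ≤ 2 ^ k * fdiffNorm k p := by
    intro β hβ
    gcongr
    unfold fdiffNorm
    rw [finsum_piAntidiag k (fun β => (fdiffMulti β (fun z => MvPolynomial.eval z p) 0) ^ 2)]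
    apply Real.abs_le_sqrt
    exact Finset.single_le_sum
      (f := fun β => (fdiffMulti β (fun z => MvPolynomial.eval z p) 0) ^ 2)
      (fun _ _ => sq_nonneg _) hβ
  refine (Finset.sum_le_card_nsmul _ _ _ h1).trans ?_
  have h2 : (Finset.piAntidiag (Finset.univ : Finset (Fin d)) k).card ≤ (2 ^ k) ^ d := by
    calc _ ≤ (Fintype.piFinset (fun _ : Fin d => Finset.range (k + 1))).card := by
          apply Finset.card_le_card
          intro β hβ
          have : ∑ i, β i = k := by simpa using hβ
          simp only [Fintype.mem_piFinset, Finset.mem_range]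
          intro i
          have := Finset.single_le_sum (f := β) (fun _ _ => Nat.zero_le _) (Finset.mem_univ i)
          omega
      _ = (k + 1) ^ d := by simp
      _ ≤ _ := Nat.pow_le_pow_left Nat.lt_two_pow_self _
  have h3 : 0 ≤ fdiffNorm k p := Real.sqrt_nonneg _
  have h4 : ((Finset.piAntidiag (Finset.univ : Finset (Fin d)) k).card : ℝ) ≤ (2 ^ k) ^ d := by
    exact_mod_cast h2
  rw [nsmul_eq_mul, mul_pow, ← pow_mul, mul_comm d k, pow_mul, mul_comm (2 ^ k) ((2 ^ k) ^ d),
    mul_assoc]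
  gcongr

/-- Derivatives at zero are controlled by finite differences at zero: there is a universal
constant `C` such that for every polynomial `p` of degree at most `m` and every `n ≤ m`,
`|∇ⁿ p(0)| ≤ Σ_{k=n}^m C^k |D^k p(0)|`. -/
theorem deriv_le_finite_differences (d : ℕ) :
    ∃ C : ℝ, 0 < C ∧
      ∀ (m : ℕ) (p : MvPolynomial (Fin d) ℝ), p.totalDegree ≤ m →
        ∀ n, n ≤ m →
          derivNorm n p ≤ ∑ k ∈ Finset.Icc n m, C ^ k * fdiffNorm k p := by
  refine ⟨(d + 1) * (2 * 2 ^ d), by positivity, ?_⟩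
  intro m p hp n hn
  set M : ℝ := ∑ k ∈ Finset.Icc n m,
      ∑ β ∈ Finset.piAntidiag (Finset.univ : Finset (Fin d)) k, 2 ^ k * |FF β p| with hM
  have hM0 : 0 ≤ M := by positivity
  have h1 : derivNorm n p ≤ (d + 1) ^ n * M := by
    unfold derivNorm
    rw [finsum_piAntidiag n (fun α => ((Nat.factorial n : ℝ) /
      ((∏ i, Nat.factorial (α i) : ℕ) : ℝ)) * (MvPolynomial.eval 0 (pdMulti α p)) ^ 2)]
    apply Real.sqrt_le_iff.mpr
    refine ⟨by positivity, ?_⟩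
    have hs := Finset.sum_pow_eq_sum_piAntidiag (Finset.univ : Finset (Fin d)) (fun _ => (1:ℝ)) n
    simp only [Finset.sum_const, Finset.card_univ, Fintype.card_fin, nsmul_eq_mul, mul_one,
      one_pow, Finset.prod_const_one] at hs
    calc _ ≤ ∑ α ∈ Finset.piAntidiag (Finset.univ : Finset (Fin d)) n,
          (Nat.multinomial Finset.univ α : ℝ) * M ^ 2 := by
          apply Finset.sum_le_sum
          intro α hα
          have hα' : ∑ i, α i = n := by simpa using hα
          have e : (Nat.factorial n : ℝ) / ((∏ i, Nat.factorial (α i) : ℕ) : ℝ) =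
              (Nat.multinomial Finset.univ α : ℝ) := by
            have hne : ((∏ i, Nat.factorial (α i) : ℕ) : ℝ) ≠ 0 := by
              exact_mod_cast Finset.prod_ne_zero_iff.mpr (fun i _ => Nat.factorial_ne_zero _)
            rw [div_eq_iff hne, ← hα', ← Nat.multinomial_spec]
            push_cast
            ring
          rw [e, ← sq_abs]
          gcongr
          exact key2 p hp α n hα'
      _ = (d : ℝ) ^ n * M ^ 2 := by rw [← Finset.sum_mul, hs]
      _ ≤ ((d + 1) ^ n) ^ 2 * M ^ 2 := by
          gcongr
          calc (d : ℝ) ^ n ≤ (d + 1) ^ n := by gcongr; linarith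
            _ ≤ ((d + 1) ^ n) ^ 2 := by
              apply le_self_pow₀ _ (by norm_num)
              apply one_le_pow₀
              have : (0:ℝ) ≤ d := by positivity
              linarith
      _ = _ := by ring
  refine h1.trans ?_
  rw [hM, Finset.mul_sum]
  apply Finset.sum_le_sum
  intro k hk
  have hk' := (Finset.mem_Icc.mp hk).1
  rw [mul_pow, mul_assoc]
  apply mul_le_mul _ (FF_le p k) (by positivity) (by positivity)
  apply pow_le_pow_right₀ _ hk'
  have : (0:ℝ) ≤ d := by positivity
  linarith
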